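/- arXiv:2205.12679 — 2 statements merged into one kernel-verified Lean document; each statement's English description precedes it below -/
import Mathlib

section
/- A symmetric loss is noise-tolerant under uniform label noise: if the noise rate satisfies η < (K − 1)/K and θ* minimizes the clean risk L_clean over Θ, then θ* also minimizes the noisy risk L_η over Θ; moreover, for all θ, L_η(θ*) − L_η(θ) = ((K − 1 − K·η)/(K − 1)) · (L_clean(θ*) − L_clean(θ)) ≤ 0. -/
open MeasureTheory Finset

theorem integrable_apply_of_measurable_index {Ω ι E : Type*} [MeasurableSpace Ω] [Finite ι]
    [MeasurableSpace ι] [MeasurableSingletonClass ι] [NormedAddCommGroup E] {μ : Measure Ω}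
    {g : ι → Ω → E} {y : Ω → ι} (hg : ∀ j, Integrable (g j) μ) (hy : Measurable y) :
    Integrable (fun ω => g (y ω) ω) μ := by
  classical
  have := Fintype.ofFinite ι
  have sum_indicator_fibers :
      (fun ω => g (y ω) ω) = fun ω => ∑ j, (y ⁻¹' {j}).indicator (g j) ω := by
    ext ω
    simp [Set.indicator_apply]
  rw [sum_indicator_fibers]
  exact integrable_finsetSum _ fun j _ => (hg j).indicator (hy (measurableSet_singleton j))

theorem uniform_noise_factor_nonneg {𝕜 : Type*} [Field 𝕜] [LinearOrder 𝕜] [IsStrictOrderedRing 𝕜]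
    {k η : 𝕜} (hk : 1 < k) (hη : η ≤ (k - 1) / k) : 0 ≤ (k - 1 - k * η) / (k - 1) := by
  have mul_le : η * k ≤ k - 1 := (le_div_iff₀ (zero_lt_one.trans hk)).mp hη
  exact div_nonneg (by linarith) (sub_pos.mpr hk).le

section UniformLabelNoise

variable {X P ι : Type*}

/-- The risk of a classifier `f`, that is, its expected loss on data distributed according to `μ`.
The noisy risk is the risk for the loss `uniformNoiseLoss η ℓ`. -/
noncomputable def classifierRisk [MeasurableSpace X] [MeasurableSpace ι] (μ : Measure (X × ι))
    (ℓ : P → ι → ℝ) (f : X → P) : ℝ :=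
  ∫ z, ℓ (f z.1) z.2 ∂μ

variable [Fintype ι]

/-- A loss is symmetric with constant `C` if, for every prediction, its values over all labels
sum to `C`. -/
def IsSymmetricLoss (ℓ : P → ι → ℝ) (C : ℝ) : Prop :=
  ∀ p, ∑ j, ℓ p j = C

/-- The effective loss under uniform label noise of rate `η`: its value at `(p, y)` is the expected
value of `ℓ p` when the label `y` is kept with probability `1 - η` and otherwise replaced by a
uniformly chosen different label. It is meaningful only when there are at least two labels, since
the denominator vanishes for a single one. -/
noncomputable def uniformNoiseLoss [DecidableEq ι] (η : ℝ) (ℓ : P → ι → ℝ) (p : P) (y : ι) : ℝ :=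
  (1 - η) * ℓ p y + η / ((Fintype.card ι : ℝ) - 1) * ∑ j with j ≠ y, ℓ p j

variable [DecidableEq ι] [Nontrivial ι] {ℓ : P → ι → ℝ} {C : ℝ}

theorem IsSymmetricLoss.uniformNoiseLoss_eq (hℓ : IsSymmetricLoss ℓ C) (η : ℝ) (p : P) (y : ι) :
    uniformNoiseLoss η ℓ p y =
      ((Fintype.card ι : ℝ) - 1 - Fintype.card ι * η) / (Fintype.card ι - 1) * ℓ p y
        + η / (Fintype.card ι - 1) * C := by
  have sum_other_labels : ∑ j with j ≠ y, ℓ p j = C - ℓ p y := by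
    rw [filter_ne', sum_erase_eq_sub (mem_univ y), hℓ p]
  have card_sub_one_ne_zero : (Fintype.card ι : ℝ) - 1 ≠ 0 :=
    sub_ne_zero.mpr (mod_cast Fintype.one_lt_card.ne')
  rw [uniformNoiseLoss, sum_other_labels]
  field_simp
  ring

variable [MeasurableSpace X] [MeasurableSpace ι] {μ : Measure (X × ι)} [IsFiniteMeasure μ]

theorem IsSymmetricLoss.classifierRisk_uniformNoiseLoss (hℓ : IsSymmetricLoss ℓ C) (η : ℝ)
    {f : X → P} (hf : Integrable (fun z : X × ι => ℓ (f z.1) z.2) μ) :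
    classifierRisk μ (uniformNoiseLoss η ℓ) f =
      ((Fintype.card ι : ℝ) - 1 - Fintype.card ι * η) / (Fintype.card ι - 1)
          * classifierRisk μ ℓ f
        + μ.real Set.univ * (η / (Fintype.card ι - 1) * C) := by
  simp only [classifierRisk, hℓ.uniformNoiseLoss_eq]
  rw [integral_add (hf.const_mul _) (integrable_const _), integral_const_mul, integral_const,
    smul_eq_mul]

theorem IsSymmetricLoss.classifierRisk_uniformNoiseLoss_sub (hℓ : IsSymmetricLoss ℓ C) (η : ℝ)
    {f g : X → P} (hf : Integrable (fun z : X × ι => ℓ (f z.1) z.2) μ)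
    (hg : Integrable (fun z : X × ι => ℓ (g z.1) z.2) μ) :
    classifierRisk μ (uniformNoiseLoss η ℓ) f - classifierRisk μ (uniformNoiseLoss η ℓ) g =
      ((Fintype.card ι : ℝ) - 1 - Fintype.card ι * η) / (Fintype.card ι - 1)
        * (classifierRisk μ ℓ f - classifierRisk μ ℓ g) := by
  rw [hℓ.classifierRisk_uniformNoiseLoss η hf, hℓ.classifierRisk_uniformNoiseLoss η hg]
  ring

theorem symmetric_loss_noise_tolerant_uniform_general {Θ : Type*} (hℓ : IsSymmetricLoss ℓ C)
    {f : Θ → X → P} (hf : ∀ θ, Integrable (fun z : X × ι => ℓ (f θ z.1) z.2) μ)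
    {η : ℝ} (hη : η ≤ ((Fintype.card ι : ℝ) - 1) / Fintype.card ι) {θstar : Θ}
    (hmin : ∀ θ, classifierRisk μ ℓ (f θstar) ≤ classifierRisk μ ℓ (f θ)) :
    (∀ θ, classifierRisk μ (uniformNoiseLoss η ℓ) (f θstar)
        ≤ classifierRisk μ (uniformNoiseLoss η ℓ) (f θ)) ∧
    (∀ θ,
      classifierRisk μ (uniformNoiseLoss η ℓ) (f θstar)
            - classifierRisk μ (uniformNoiseLoss η ℓ) (f θ)
          = ((Fintype.card ι : ℝ) - 1 - Fintype.card ι * η) / (Fintype.card ι - 1)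
            * (classifierRisk μ ℓ (f θstar) - classifierRisk μ ℓ (f θ)) ∧
      classifierRisk μ (uniformNoiseLoss η ℓ) (f θstar)
        - classifierRisk μ (uniformNoiseLoss η ℓ) (f θ) ≤ 0) := by
  have excess_eq := fun θ => hℓ.classifierRisk_uniformNoiseLoss_sub η (hf θstar) (hf θ)
  have factor_nonneg :=
    uniform_noise_factor_nonneg (Nat.one_lt_cast.mpr (Fintype.one_lt_card (α := ι))) hη
  have excess_nonpos (θ : Θ) :
      classifierRisk μ (uniformNoiseLoss η ℓ) (f θstar)
        - classifierRisk μ (uniformNoiseLoss η ℓ) (f θ) ≤ 0 :=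
    (excess_eq θ).trans_le
      (mul_nonpos_of_nonneg_of_nonpos factor_nonneg (sub_nonpos.mpr (hmin θ)))
  exact ⟨fun θ => sub_nonpos.mp (excess_nonpos θ), fun θ => ⟨excess_eq θ, excess_nonpos θ⟩⟩

end UniformLabelNoise

/-- A symmetric loss is noise-tolerant under uniform label noise: if `η < (K-1)/K` and `θ*`
minimizes the clean risk, then `θ*` also minimizes the noisy risk, and the excess noisy risk
is an explicit nonpositive multiple of the excess clean risk. -/
theorem symmetric_loss_noise_tolerant_uniform
    {X : Type*} [MeasurableSpace X] {Θ : Type*} {P : Type*}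
    (K : ℕ) (hK : 2 ≤ K)
    (f : Θ → X → P) (ℓ : P → Fin K → ℝ) (C : ℝ)
    (hsym : ∀ p : P, ∑ j : Fin K, ℓ p j = C)
    (μ : Measure (X × Fin K)) [IsProbabilityMeasure μ]
    (hmeas : ∀ (θ : Θ) (j : Fin K), Measurable (fun z : X × Fin K => ℓ (f θ z.1) j))
    (hint : ∀ (θ : Θ) (j : Fin K), Integrable (fun z : X × Fin K => ℓ (f θ z.1) j) μ)
    (η : ℝ) (hη0 : 0 ≤ η) (hη1 : η < 1)
    (Lclean Lnoisy : Θ → ℝ)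
    (hLclean : ∀ θ : Θ, Lclean θ = ∫ z : X × Fin K, ℓ (f θ z.1) z.2 ∂μ)
    (hLnoisy : ∀ θ : Θ, Lnoisy θ =
      ∫ z : X × Fin K,
        ((1 - η) * ℓ (f θ z.1) z.2
          + (η / ((K : ℝ) - 1)) * ∑ j ∈ Finset.univ.filter (fun j => j ≠ z.2), ℓ (f θ z.1) j) ∂μ)
    (hη : η < ((K : ℝ) - 1) / (K : ℝ))
    (θstar : Θ) (hmin : ∀ θ : Θ, Lclean θstar ≤ Lclean θ) :
    (∀ θ : Θ, Lnoisy θstar ≤ Lnoisy θ) ∧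
    (∀ θ : Θ,
      Lnoisy θstar - Lnoisy θ
          = (((K : ℝ) - 1 - (K : ℝ) * η) / ((K : ℝ) - 1)) * (Lclean θstar - Lclean θ) ∧
      Lnoisy θstar - Lnoisy θ ≤ 0) := by
  have : Nontrivial (Fin K) := Fin.nontrivial_iff_two_le.mpr hK
  have hobs (θ : Θ) := integrable_apply_of_measurable_index (hint θ) measurable_snd
  simpa [classifierRisk, uniformNoiseLoss, ← hLclean, ← hLnoisy] using
    symmetric_loss_noise_tolerant_uniform_general (μ := μ) (f := f) (η := η) (θstar := θstar)
      hsym hobs (by simpa using hη.le) (by simpa only [classifierRisk, ← hLclean] using hmin)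
end

section
/- A symmetric loss is noise-tolerant under non-uniform label noise: assume in addition that ℓ(p, j) ≥ 0 for all p and j, that η(x) < (K − 1)/K for all x ∈ X, and that θ* ∈ Θ satisfies L_clean(θ*) = 0. Then θ* minimizes the noisy risk L_nu over Θ, i.e. L_nu(θ*) ≤ L_nu(θ) for all θ ∈ Θ. -/
open MeasureTheory Finset

/-!
Fix a sample with clean loss `a`. Under a symmetric loss the losses of the wrong labels add up to
`C - a`, so the noisy loss is `(1 - η - η / (K - 1)) * a + η / (K - 1) * C`: an affine function of
`a`, the same for every predictor, and nondecreasing exactly because `η ≤ (K - 1) / K`. A predictor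
with zero clean risk has the least possible clean loss at almost every sample, hence the least
noisy loss there.
-/

lemma one_sub_sub_div_nonneg_of_le {K r : ℝ} (hK : 1 < K) (hr : r ≤ (K - 1) / K) :
    0 ≤ 1 - r - r / (K - 1) := by
  have mul_le : r * K ≤ K - 1 := (le_div_iff₀ (by linarith)).1 hr
  rw [sub_nonneg, div_le_iff₀ (sub_pos.2 hK)]
  linarith

section NoisyLoss

variable {Y : Type*} [Fintype Y] [DecidableEq Y]

/-- The expected loss at a sample with clean label `y` when, with probability `r`, the label is
replaced by one of the other labels chosen uniformly; `v j` is the loss against label `j`.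
The division is by zero if `Y` has a single label. -/
noncomputable def noisyLoss (r : ℝ) (v : Y → ℝ) (y : Y) : ℝ :=
  (1 - r) * v y + r / ((Fintype.card Y : ℝ) - 1) * ∑ j ∈ univ.filter (fun j => j ≠ y), v j

lemma noisyLoss_eq_affine (r : ℝ) (v : Y → ℝ) (y : Y) :
    noisyLoss r v y = (1 - r - r / ((Fintype.card Y : ℝ) - 1)) * v y
      + r / ((Fintype.card Y : ℝ) - 1) * ∑ j, v j := by
  rw [noisyLoss, filter_ne', ← add_sum_erase univ v (mem_univ y)]
  ring

lemma noisyLoss_le_noisyLoss [Nontrivial Y] {r : ℝ} {u v : Y → ℝ} {y : Y}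
    (hr : r ≤ ((Fintype.card Y : ℝ) - 1) / Fintype.card Y)
    (hsum : ∑ j, u j = ∑ j, v j) (huv : u y ≤ v y) :
    noisyLoss r u y ≤ noisyLoss r v y := by
  rw [noisyLoss_eq_affine, noisyLoss_eq_affine, hsum]
  gcongr
  exact one_sub_sub_div_nonneg_of_le (mod_cast Fintype.one_lt_card) hr

end NoisyLoss

section Integrability

variable {Ω Y : Type*} [MeasurableSpace Ω] [MeasurableSpace Y] [MeasurableSingletonClass Y]
  {μ : Measure Ω} {s : Ω → Y}

lemma integrable_apply_of_forall_integrable [Finite Y] {E : Type*} [NormedAddCommGroup E]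
    {v : Ω → Y → E} (hs : Measurable s) (hv : ∀ j, Integrable (fun ω => v ω j) μ) :
    Integrable (fun ω => v ω (s ω)) μ := by
  classical
  have := Fintype.ofFinite Y
  have eq_sum_indicator : (fun ω => v ω (s ω)) =
      fun ω => ∑ j, (s ⁻¹' {j}).indicator (fun ω => v ω j) ω := by
    funext ω
    simp [Set.indicator_apply]
  rw [eq_sum_indicator]
  exact integrable_finsetSum _ fun j _ => (hv j).indicator (hs (measurableSet_singleton j))

lemma integrable_noisyLoss [Fintype Y] [DecidableEq Y] {r : Ω → ℝ} {c : ℝ} {v : Ω → Y → ℝ}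
    (hs : Measurable s) (hr : AEStronglyMeasurable r μ) (hrc : ∀ᵐ ω ∂μ, ‖r ω‖ ≤ c)
    (hv : ∀ j, Integrable (fun ω => v ω j) μ) :
    Integrable (fun ω => noisyLoss (r ω) (v ω) (s ω)) μ := by
  have clean : Integrable (fun ω => v ω (s ω)) μ := integrable_apply_of_forall_integrable hs hv
  have total : Integrable (fun ω => ∑ j, v ω j) μ := integrable_finsetSum _ fun j _ => hv j
  have excess : Integrable (fun ω =>
      (∑ j, v ω j - v ω (s ω)) / ((Fintype.card Y : ℝ) - 1) - v ω (s ω)) μ :=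
    ((total.sub clean).div_const _).sub clean
  refine (clean.add (excess.bdd_mul hr hrc)).congr (.of_forall fun ω => ?_)
  simp only [Pi.add_apply, noisyLoss_eq_affine]
  ring

end Integrability

section Risk

variable {X Y P : Type*} [MeasurableSpace X] [MeasurableSpace Y]

/-- The clean risk of the predictor `h` for the loss `ℓ` and the data distribution `μ`. -/
noncomputable def cleanRisk (μ : Measure (X × Y)) (ℓ : P → Y → ℝ) (h : X → P) : ℝ :=
  ∫ z, ℓ (h z.1) z.2 ∂μ

/-- The risk of the predictor `h` when the label of the sample `z` is corrupted with probability
`η z`. The noise rate may depend on the clean label as well as on the instance. -/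
noncomputable def noisyRisk [Fintype Y] [DecidableEq Y] (μ : Measure (X × Y))
    (η : X × Y → ℝ) (ℓ : P → Y → ℝ) (h : X → P) : ℝ :=
  ∫ z, noisyLoss (η z) (ℓ (h z.1)) z.2 ∂μ

variable [MeasurableSingletonClass Y] {μ : Measure (X × Y)} {ℓ : P → Y → ℝ}

lemma ae_loss_eq_zero_of_cleanRisk_eq_zero [Finite Y] {h : X → P}
    (hpos : ∀ p j, 0 ≤ ℓ p j)
    (hint : ∀ j, Integrable (fun z : X × Y => ℓ (h z.1) j) μ) (hzero : cleanRisk μ ℓ h = 0) :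
    ∀ᵐ z ∂μ, ℓ (h z.1) z.2 = 0 :=
  (integral_eq_zero_iff_of_nonneg (fun _ => hpos _ _)
    (integrable_apply_of_forall_integrable measurable_snd hint)).1 hzero

variable [Fintype Y] [DecidableEq Y] [Nontrivial Y] {η : X × Y → ℝ} {C : ℝ}

lemma noisyRisk_le_noisyRisk_of_ae_loss_le {h₀ h : X → P} (hsym : ∀ p, ∑ j, ℓ p j = C)
    (hint₀ : ∀ j, Integrable (fun z : X × Y => ℓ (h₀ z.1) j) μ)
    (hint : ∀ j, Integrable (fun z : X × Y => ℓ (h z.1) j) μ)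
    (hηmeas : AEStronglyMeasurable η μ) (hη0 : ∀ z, 0 ≤ η z)
    (hη : ∀ z, η z ≤ ((Fintype.card Y : ℝ) - 1) / Fintype.card Y)
    (hle : ∀ᵐ z ∂μ, ℓ (h₀ z.1) z.2 ≤ ℓ (h z.1) z.2) :
    noisyRisk μ η ℓ h₀ ≤ noisyRisk μ η ℓ h := by
  have η_bounded : ∀ᵐ z ∂μ, ‖η z‖ ≤ ((Fintype.card Y : ℝ) - 1) / Fintype.card Y :=
    .of_forall fun z => (Real.norm_of_nonneg (hη0 z)).trans_le (hη z)
  refine integral_mono_ae (integrable_noisyLoss measurable_snd hηmeas η_bounded hint₀)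
    (integrable_noisyLoss measurable_snd hηmeas η_bounded hint) ?_
  filter_upwards [hle] with z hz
  exact noisyLoss_le_noisyLoss (hη z) ((hsym _).trans (hsym _).symm) hz

theorem symmetric_loss_noise_tolerant_nonuniform_general {h₀ : X → P}
    (hsym : ∀ p, ∑ j, ℓ p j = C) (hpos : ∀ p j, 0 ≤ ℓ p j)
    (hint₀ : ∀ j, Integrable (fun z : X × Y => ℓ (h₀ z.1) j) μ)
    (hηmeas : AEStronglyMeasurable η μ) (hη0 : ∀ z, 0 ≤ η z)
    (hη : ∀ z, η z ≤ ((Fintype.card Y : ℝ) - 1) / Fintype.card Y)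
    (hzero : cleanRisk μ ℓ h₀ = 0) {h : X → P}
    (hint : ∀ j, Integrable (fun z : X × Y => ℓ (h z.1) j) μ) :
    noisyRisk μ η ℓ h₀ ≤ noisyRisk μ η ℓ h := by
  refine noisyRisk_le_noisyRisk_of_ae_loss_le hsym hint₀ hint hηmeas hη0 hη ?_
  filter_upwards [ae_loss_eq_zero_of_cleanRisk_eq_zero hpos hint₀ hzero] with z hz
  exact hz.trans_le (hpos _ _)

end Risk

/-- A symmetric loss is noise-tolerant under non-uniform label noise: if the loss is
nonnegative, `η(x) < (K-1)/K` for all `x`, and `θ*` achieves zero clean risk, then `θ*`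
minimizes the noisy risk. -/
theorem symmetric_loss_noise_tolerant_nonuniform
    {X : Type*} [MeasurableSpace X] {Θ : Type*} {P : Type*}
    (K : ℕ) (hK : 2 ≤ K)
    (f : Θ → X → P) (ℓ : P → Fin K → ℝ) (C : ℝ)
    (hsym : ∀ p : P, ∑ j : Fin K, ℓ p j = C)
    (hpos : ∀ (p : P) (j : Fin K), 0 ≤ ℓ p j)
    (μ : Measure (X × Fin K)) [IsProbabilityMeasure μ]
    (hmeas : ∀ (θ : Θ) (j : Fin K), Measurable (fun z : X × Fin K => ℓ (f θ z.1) j))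
    (hint : ∀ (θ : Θ) (j : Fin K), Integrable (fun z : X × Fin K => ℓ (f θ z.1) j) μ)
    (η : X → ℝ) (hηmeas : Measurable η) (hη01 : ∀ x : X, 0 ≤ η x ∧ η x ≤ 1)
    (hη : ∀ x : X, η x < ((K : ℝ) - 1) / (K : ℝ))
    (Lclean Lnu : Θ → ℝ)
    (hLclean : ∀ θ : Θ, Lclean θ = ∫ z : X × Fin K, ℓ (f θ z.1) z.2 ∂μ)
    (hLnu : ∀ θ : Θ, Lnu θ =
      ∫ z : X × Fin K,
        ((1 - η z.1) * ℓ (f θ z.1) z.2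
          + (η z.1 / ((K : ℝ) - 1)) *
              ∑ j ∈ Finset.univ.filter (fun j => j ≠ z.2), ℓ (f θ z.1) j) ∂μ)
    (θstar : Θ) (hstar : Lclean θstar = 0) :
    ∀ θ : Θ, Lnu θstar ≤ Lnu θ := by
  have : Nontrivial (Fin K) := Fin.nontrivial_iff_two_le.2 hK
  have Lnu_eq : ∀ θ, Lnu θ = noisyRisk μ (fun z => η z.1) ℓ (f θ) := fun θ => by
    simp only [hLnu, noisyRisk, noisyLoss, Fintype.card_fin]
  intro θ
  rw [Lnu_eq, Lnu_eq]
  exact symmetric_loss_noise_tolerant_nonuniform_general hsym hpos (hint θstar)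
    (hηmeas.comp measurable_fst).aestronglyMeasurable (fun z => (hη01 z.1).1)
    (fun z => by rw [Fintype.card_fin]; exact (hη z.1).le)
    ((hLclean θstar).symm.trans hstar) (hint θ)
end
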